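/- arXiv:1401.3326 — 7 statements merged into one kernel-verified Lean document; each statement's English description precedes it below -/
import Mathlib

section
/- Let β be a non-zero real number, let ε = 1 + βi, let K = ℚ(βi), and let Q be a non-trivial divisible subgroup of (ℝ,+) whose ℚ-linear dimension l is finite. Let G = {exp(εt + q) : t ∈ ℝ, q ∈ Q} ⊆ ℂ*. Assume SC_K holds. Then for every n ≥ 1 and every tuple y ∈ (ℂ*)^n one has 2·trdeg(y) − r(y) ≥ −3l − trdeg(K), where r(y) = dim_ℚ(ℚ ⊗_ℤ (D(y) ∩ G)) and D(y) = {z ∈ ℂ* : z^m lies in the multiplicative subgroup generated by y₁,…,y_n for some integer m ≥ 1} is the divisible hull of the subgroup generated by y. -/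
open Complex TensorProduct

noncomputable section

/-- `F`-linear dimension of the `F`-span of a set of complex numbers. -/
def linDim (F : Type*) [Field F] [Algebra F ℂ] (s : Set ℂ) : ℕ :=
  Module.finrank F (Submodule.span F s)

/-- Transcendence degree over ℚ of ℚ(s): the size of the largest algebraically
independent finite subset of `s`. -/
def trdeg (s : Set ℂ) : ℕ :=
  sSup {k : ℕ | ∃ t : Finset ℂ, ↑t ⊆ s ∧ t.card = k ∧
    AlgebraicIndependent ℚ (fun x : {y : ℂ // y ∈ t} => (x : ℂ))}

/-- The complex exponential as a map into the units of ℂ. -/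
def cexpU (z : ℂ) : ℂˣ := Units.mk0 (Complex.exp z) (Complex.exp_ne_zero z)

lemma cexpU_add (z w : ℂ) : cexpU (z + w) = cexpU z * cexpU w := by
  ext; simp [cexpU, Complex.exp_add]

lemma cexpU_zero : cexpU 0 = 1 := by
  ext; simp [cexpU]

lemma cexpU_neg (z : ℂ) : cexpU (-z) = (cexpU z)⁻¹ := by
  ext; simp [cexpU, Complex.exp_neg]

/-- The green subgroup `G = exp(εℝ + Q)` of `ℂ*`. -/
def greenGroup (ε : ℂ) (Q : AddSubgroup ℝ) : Subgroup ℂˣ where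
  carrier := {u | ∃ t : ℝ, ∃ q ∈ Q, u = cexpU (ε * t + q)}
  one_mem' := ⟨0, 0, Q.zero_mem, by simp [cexpU_zero]⟩
  mul_mem' := by
    rintro u v ⟨t₁, q₁, hq₁, rfl⟩ ⟨t₂, q₂, hq₂, rfl⟩
    exact ⟨t₁ + t₂, q₁ + q₂, Q.add_mem hq₁ hq₂, by
      rw [← cexpU_add]; congr 1; push_cast; ring⟩
  inv_mem' := by
    rintro u ⟨t, q, hq, rfl⟩
    exact ⟨-t, -q, Q.neg_mem hq, by rw [← cexpU_neg]; congr 1; push_cast; ring⟩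

/-- The divisible hull `D(S)` of the subgroup of `ℂ*` generated by a set `S`:
all `u` with `u ^ m` in the subgroup generated by `S` for some `m ≥ 1`. -/
def divHull (S : Set ℂˣ) : Subgroup ℂˣ where
  carrier := {u | ∃ m : ℕ, 1 ≤ m ∧ u ^ m ∈ Subgroup.closure S}
  one_mem' := ⟨1, le_refl 1, by simpa using Subgroup.one_mem _⟩
  mul_mem' := by
    rintro u v ⟨m₁, hm₁, h₁⟩ ⟨m₂, hm₂, h₂⟩
    refine ⟨m₁ * m₂, Nat.one_le_iff_ne_zero.mpr (by positivity), ?_⟩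
    rw [mul_pow]
    exact Subgroup.mul_mem _ (by rw [pow_mul]; exact Subgroup.pow_mem _ h₁ _)
      (by rw [mul_comm m₁ m₂, pow_mul]; exact Subgroup.pow_mem _ h₂ _)
  inv_mem' := by
    rintro u ⟨m, hm, h⟩
    exact ⟨m, hm, by rw [inv_pow]; exact Subgroup.inv_mem _ h⟩

/-- The ℚ-rank of a subgroup `H` of `ℂ*`: `dim_ℚ (ℚ ⊗_ℤ H)`. -/
def qRank (H : Subgroup ℂˣ) : ℕ :=
  Module.finrank ℚ (ℚ ⊗[ℤ] Additive ↥H)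

end

/-!
Let `x` be logarithms of a maximal multiplicatively independent family in `D(y) ∩ G`, chosen so
that `Re z - Im z / β ∈ Q` for every coordinate `z`. As `exp x̄` is the conjugate of `exp x`, the
tuple `exp (x, x̄)` has transcendence degree at most `2 trdeg(y)`, so Schanuel's inequality for
`(x, x̄)` reduces the claim to `lin.d._ℚ(x) + lin.d._K(x, x̄) ≤ lin.d._ℚ(x, x̄) + l`.

Let `E` be the `ℚ`-span of `x`, and put `R = Re(E)` and `J = (Im / β)(E)`. On `E` the map
`Re - Im / β` has image of dimension at most `l`, and its kernel embeds into `R ∩ J`, so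
rank-nullity gives `dim E + dim (R + J) ≤ l + dim R + dim J`. Finally `(x, x̄)` spans
`R ⊕ βJ i` over `ℚ`, while over `K ∋ βi` it lies in the span of `R + J`. This yields the bound
`-l - trdeg(K)`.
-/


open scoped ComplexConjugate

section LinearAlgebra

open Module Submodule

theorem finrank_le_finrank_of_le_span {F L V : Type*} [Field F] [Field L] [Algebra F L]
    [AddCommGroup V] [Module F V] [Module L V] [IsScalarTower F L V]
    {U : Submodule F V} [FiniteDimensional F U] {W : Submodule L V} (hW : W ≤ span L (U : Set V)) :
    finrank L W ≤ finrank F U := by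
  let b : Fin (finrank F U) → V := fun i => finBasis F U i
  have span_b : span F (Set.range b) = U := by
    rw [show Set.range b = U.subtype '' Set.range (finBasis F U) from Set.range_comp _ _,
      span_image, (finBasis F U).span_eq, map_subtype_top]
  rw [← span_b, span_span_of_tower] at hW
  have : FiniteDimensional L (span L (Set.range b)) := .span_of_finite L (Set.finite_range b)
  exact (finrank_mono hW).trans ((finrank_range_le_card b).trans (Fintype.card_fin _).le)

theorem finrank_add_finrank_map_sup_map_le {F V W : Type*} [Field F] [AddCommGroup V] [Module F V]
    [AddCommGroup W] [Module F W] (E : Submodule F V) [FiniteDimensional F E] {f g : V →ₗ[F] W}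
    (hfg : Disjoint f.ker g.ker) :
    finrank F E + finrank F ↥(E.map f ⊔ E.map g) ≤
      finrank F (E.map (f - g)) + (finrank F (E.map f) + finrank F (E.map g)) := by
  have rank_nullity : finrank F (E.map (f - g)) + finrank F ((f - g).domRestrict E).ker
      = finrank F E := by
    rw [← LinearMap.range_domRestrict, LinearMap.finrank_range_add_finrank_ker]
  have ker_le_inf : finrank F ((f - g).domRestrict E).ker ≤ finrank F ↥(E.map f ⊓ E.map g) := by
    have eq_of_mem_ker (z : ((f - g).domRestrict E).ker) : f z = g z :=
      sub_eq_zero.mp (LinearMap.mem_ker.mp z.2)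
    let φ : ((f - g).domRestrict E).ker →ₗ[F] ↥(E.map f ⊓ E.map g) :=
      ((f.domRestrict E).domRestrict _).codRestrict _ fun z =>
        ⟨mem_map_of_mem z.1.2, z, z.1.2, (eq_of_mem_ker z).symm⟩
    refine LinearMap.finrank_le_finrank_of_injective (f := φ) ?_
    rw [← LinearMap.ker_eq_bot, eq_bot_iff]
    intro z hz
    have hf : f z = 0 := congrArg Subtype.val (LinearMap.mem_ker.mp hz)
    exact Subtype.ext (Subtype.ext (disjoint_def.mp hfg _ hf ((eq_of_mem_ker z).symm.trans hf)))
  have := finrank_sup_add_finrank_inf_eq (E.map f) (E.map g)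
  omega

theorem finrank_image_re_add_finrank_image_im_le {s : Set ℂ} (hs : s.Finite) :
    (re '' s).finrank ℚ + (im '' s).finrank ℚ ≤ linDim ℚ (s ∪ conj '' s) := by
  set R := span ℚ (re '' s)
  set M := span ℚ (im '' s)
  set V := span ℚ (s ∪ conj '' s)
  have : FiniteDimensional ℚ R := .span_of_finite ℚ (hs.image re)
  have : FiniteDimensional ℚ M := .span_of_finite ℚ (hs.image im)
  have : FiniteDimensional ℚ V := .span_of_finite ℚ (hs.union (hs.image conj))
  let e : (ℝ × ℝ) ≃ₗ[ℚ] ℂ := equivRealProdLm.symm.restrictScalars ℚ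
  have self_mem {z : ℂ} (hz : z ∈ s) : z ∈ V := subset_span (.inl hz)
  have conj_mem {z : ℂ} (hz : z ∈ s) : conj z ∈ V := subset_span (.inr ⟨z, hz, rfl⟩)
  have prod_le : R.prod M ≤ V.comap e.toLinearMap := by
    refine (prod_le_iff _ _ _).mpr
      ⟨(map_span_le _ _ _).mpr ?_, (map_span_le _ _ _).mpr ?_⟩
    · rintro _ ⟨z, hz, rfl⟩
      have re_eq : e (z.re, 0) = (1 / 2 : ℚ) • (z + conj z) := by
        rw [add_conj, Rat.smul_def]
        simp [e, Complex.ext_iff]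
      exact mem_comap.mpr (re_eq ▸ smul_mem _ _ (add_mem (self_mem hz) (conj_mem hz)))
    · rintro _ ⟨z, hz, rfl⟩
      have im_eq : e (0, z.im) = (1 / 2 : ℚ) • (z - conj z) := by
        rw [sub_conj, Rat.smul_def]
        simp [e, Complex.ext_iff]
      exact mem_comap.mpr (im_eq ▸ smul_mem _ _ (sub_mem (self_mem hz) (conj_mem hz)))
  let φ : R × M →ₗ[ℚ] V :=
    (e.toLinearMap ∘ₗ R.subtype.prodMap M.subtype).codRestrict V fun p => prod_le ⟨p.1.2, p.2.2⟩
  have φ_injective : Function.Injective φ := fun _ _ h =>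
    R.injective_subtype.prodMap M.injective_subtype (e.injective (congrArg Subtype.val h))
  have finrank_le := LinearMap.finrank_le_finrank_of_injective φ_injective
  rwa [finrank_prod] at finrank_le

theorem linDim_union_image_conj_le {β : ℝ} (hβ : β ≠ 0) {K : IntermediateField ℚ ℂ}
    (hK : (β : ℂ) * I ∈ K) {s : Set ℂ} (hs : s.Finite) :
    linDim K (s ∪ conj '' s) ≤ (re '' s ∪ (fun z => z.im / β) '' s).finrank ℚ := by
  set U := span ℚ (re '' s ∪ (fun z => z.im / β) '' s)
  have : FiniteDimensional ℚ U := .span_of_finite ℚ ((hs.image _).union (hs.image _))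
  let ofRealₗ : ℝ →ₗ[ℚ] ℂ := ofRealLI.toLinearMap.restrictScalars ℚ
  have re_mem {z : ℂ} (hz : z ∈ s) : (z.re : ℂ) ∈ span K (U.map ofRealₗ : Set ℂ) :=
    subset_span ⟨_, subset_span (.inl ⟨z, hz, rfl⟩), rfl⟩
  have im_mem {z : ℂ} (hz : z ∈ s) : (z.im : ℂ) * I ∈ span K (U.map ofRealₗ : Set ℂ) := by
    have : (z.im : ℂ) * I = (⟨β * I, hK⟩ : K) • ((z.im / β : ℝ) : ℂ) := by
      rw [IntermediateField.smul_def, smul_eq_mul]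
      push_cast
      field_simp [ofReal_ne_zero.mpr hβ]
    rw [this]
    exact smul_mem _ _ (subset_span ⟨_, subset_span (.inr ⟨z, hz, rfl⟩), rfl⟩)
  have span_le_span : span K (s ∪ conj '' s) ≤ span K (U.map ofRealₗ : Set ℂ) := by
    rw [span_le, Set.union_subset_iff, Set.image_subset_iff]
    refine ⟨fun z hz => ?_, fun z hz => ?_⟩
    · rw [← re_add_im z]
      exact add_mem (re_mem hz) (im_mem hz)
    · have : conj z = z.re - z.im * I := by simp [Complex.ext_iff]
      rw [Set.mem_preimage, this]
      exact sub_mem (re_mem hz) (im_mem hz)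
  exact (finrank_le_finrank_of_le_span span_le_span).trans (finrank_map_le ofRealₗ U)

theorem linDim_add_linDim_union_image_conj_le {β : ℝ} (hβ : β ≠ 0) {K : IntermediateField ℚ ℂ}
    (hK : (β : ℂ) * I ∈ K) {P : Submodule ℚ ℝ} [FiniteDimensional ℚ P] {s : Set ℂ} (hs : s.Finite)
    (hP : ∀ z ∈ s, z.re - z.im / β ∈ P) :
    linDim ℚ s + linDim K (s ∪ conj '' s) ≤ linDim ℚ (s ∪ conj '' s) + finrank ℚ P := by
  let reₗ : ℂ →ₗ[ℚ] ℝ := reLm.restrictScalars ℚ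
  let divβ : ℝ →ₗ[ℚ] ℝ := LinearMap.mulRight ℚ β⁻¹
  let imₗ : ℂ →ₗ[ℚ] ℝ := imLm.restrictScalars ℚ
  have : FiniteDimensional ℚ (span ℚ s) := .span_of_finite ℚ hs
  have disjoint_ker : Disjoint reₗ.ker (divβ ∘ₗ imₗ).ker := by
    rw [disjoint_def]
    intro z hre him
    exact Complex.ext hre ((mul_eq_zero_iff_right (inv_ne_zero hβ)).mp him)
  have key := finrank_add_finrank_map_sup_map_le (span ℚ s) disjoint_ker
  have sub_le : finrank ℚ ((span ℚ s).map (reₗ - divβ ∘ₗ imₗ)) ≤ finrank ℚ P :=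
    finrank_mono (map_le_iff_le_comap.mpr (span_le.mpr hP))
  have divβ_le : finrank ℚ ((span ℚ s).map (divβ ∘ₗ imₗ)) ≤ finrank ℚ ((span ℚ s).map imₗ) := by
    rw [Submodule.map_comp]
    exact finrank_map_le _ _
  have map_re : (span ℚ s).map reₗ = span ℚ (re '' s) := map_span _ _
  have map_im : (span ℚ s).map imₗ = span ℚ (im '' s) := map_span _ _
  have map_sup_map : (span ℚ s).map reₗ ⊔ (span ℚ s).map (divβ ∘ₗ imₗ)
      = span ℚ (re '' s ∪ (fun z => z.im / β) '' s) := by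
    rw [map_span, map_span, ← span_union]
    rfl
  rw [map_sup_map, map_re] at key
  rw [map_im] at divβ_le
  have linDim_K := linDim_union_image_conj_le hβ hK hs
  have linDim_ℚ := finrank_image_re_add_finrank_image_im_le hs
  simp only [Set.finrank, linDim] at linDim_K linDim_ℚ ⊢
  omega

end LinearAlgebra

section TranscendenceDegree

open AlgebraicIndependent

theorem matroid_comap_algHom {R A B : Type*} [CommRing R] [CommRing A] [CommRing B]
    [Algebra R A] [Algebra R B] [FaithfulSMul R A] [FaithfulSMul R B] [NoZeroDivisors A]
    [NoZeroDivisors B] {σ : A →ₐ[R] B} (hσ : Function.Injective σ) :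
    (matroid R B).comap σ = matroid R A := by
  refine Matroid.ext_indep rfl fun I _ => ?_
  rw [Matroid.comap_indep_iff_of_injOn hσ.injOn, matroid_indep_iff, matroid_indep_iff]
  exact (algebraicIndependent_image hσ.injOn).symm.trans (σ.algebraicIndependent_iff hσ)

theorem eRk_matroid_image_algHom {R A B : Type*} [CommRing R] [CommRing A] [CommRing B]
    [Algebra R A] [Algebra R B] [FaithfulSMul R A] [FaithfulSMul R B] [NoZeroDivisors A]
    [NoZeroDivisors B] {σ : A →ₐ[R] B} (hσ : Function.Injective σ) (s : Set A) :
    (matroid R B).eRk (σ '' s) = (matroid R A).eRk s := by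
  rw [← matroid_comap_algHom hσ, Matroid.eRk_comap]

theorem coe_trdeg_eq_eRk {s : Set ℂ} (hs : s.Finite) :
    (trdeg s : ℕ∞) = (matroid ℚ ℂ).eRk s := by
  set cards := {k : ℕ | ∃ t : Finset ℂ, ↑t ⊆ s ∧ t.card = k ∧
    AlgebraicIndependent ℚ (fun x : {y : ℂ // y ∈ t} => (x : ℂ))}
  have bddAbove : BddAbove cards := by
    refine ⟨hs.toFinset.card, ?_⟩
    rintro _ ⟨t, hts, rfl, -⟩
    exact Finset.card_le_card (Set.Finite.subset_toFinset.mpr hts)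
  have nonempty : cards.Nonempty :=
    ⟨0, ∅, by simp, rfl, (matroid ℚ ℂ).empty_indep.subset (by simp)⟩
  refine le_antisymm ?_ (Matroid.eRk_le_iff.mpr fun I hI hInd => ?_)
  · obtain ⟨t, hts, card_eq, indep⟩ : sSup cards ∈ cards := Nat.sSup_mem nonempty bddAbove
    have card_le := Matroid.Indep.encard_le_eRk_of_subset (M := matroid ℚ ℂ) indep hts
    rwa [Set.encard_coe_eq_coe_finsetCard, card_eq] at card_le
  · lift I to Finset ℂ using hs.subset hI
    rw [Set.encard_coe_eq_coe_finsetCard]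
    exact_mod_cast le_csSup bddAbove ⟨I, hI, rfl, hInd⟩

theorem trdeg_union_image_conj_le_of_subset_closure {s t : Set ℂ} (hs : s.Finite) (ht : t.Finite)
    (hst : s ⊆ (matroid ℚ ℂ).closure t) : trdeg (s ∪ conj '' s) ≤ 2 * trdeg t := by
  let conjℚ : ℂ ≃ₐ[ℚ] ℂ := conjAe.restrictScalars ℚ
  have eRk_conj : (matroid ℚ ℂ).eRk (conj '' s) = (matroid ℚ ℂ).eRk s :=
    eRk_matroid_image_algHom (σ := conjℚ.toAlgHom) conjℚ.injective s
  have eRk_le : (matroid ℚ ℂ).eRk s ≤ (matroid ℚ ℂ).eRk t :=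
    ((matroid ℚ ℂ).eRk_mono hst).trans_eq ((matroid ℚ ℂ).eRk_closure_eq t)
  have : (trdeg (s ∪ conj '' s) : ℕ∞) ≤ 2 * trdeg t := by
    rw [coe_trdeg_eq_eRk (hs.union (hs.image _)), coe_trdeg_eq_eRk ht, two_mul]
    refine ((matroid ℚ ℂ).eRk_union_le_eRk_add_eRk _ _).trans ?_
    rw [eRk_conj]
    exact add_le_add eRk_le eRk_le
  exact_mod_cast this

theorem val_mem_closure_of_mem_divHull {S : Set ℂˣ} {u : ℂˣ} (hu : u ∈ divHull S) :
    (u : ℂ) ∈ (matroid ℚ ℂ).closure (Units.val '' S) := by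
  obtain ⟨m, hm, hum⟩ := hu
  rw [matroid_closure_eq]
  refine IsAlgebraic.of_pow (n := m) hm ?_
  rw [← Units.val_pow_eq_pow_val]
  generalize u ^ m = w at hum ⊢
  induction hum using Subgroup.closure_induction with
  | mem v hv =>
    exact isAlgebraic_algebraMap (R := Algebra.adjoin ℚ (Units.val '' S))
      ⟨v, Algebra.subset_adjoin ⟨v, hv, rfl⟩⟩
  | one => exact isAlgebraic_one
  | mul v w _ _ hv hw => exact hv.mul hw
  | inv v _ hv => simpa using hv.inv

end TranscendenceDegree

section GreenGroup

theorem linearIndependent_of_cexpU_eq {ι : Type*} {H : Subgroup ℂˣ} {g : ι → Additive H}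
    (hg : LinearIndependent ℤ g) {x : ι → ℂ} (hx : ∀ j, cexpU (x j) = (g j).toMul) :
    LinearIndependent ℚ x := by
  let expₗ : ℂ →ₗ[ℤ] Additive ℂˣ := AddMonoidHom.toIntLinearMap
    { toFun := fun z => .ofMul (cexpU z)
      map_zero' := congrArg _ cexpU_zero
      map_add' := fun z w => congrArg _ (cexpU_add z w) }
  let incl : Additive H →ₗ[ℤ] Additive ℂˣ := H.subtype.toAdditive.toIntLinearMap
  have exp_comp_x : expₗ ∘ x = incl ∘ g := funext fun j => congrArg Additive.ofMul (hx j)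
  rw [← LinearIndependent.iff_fractionRing ℤ ℚ]
  refine .of_comp expₗ ?_
  rw [exp_comp_x]
  exact hg.map' incl (LinearMap.ker_eq_bot.mpr H.subtype_injective)

theorem exists_linearIndependent_cexpU_mem {H : Subgroup ℂˣ} {L : Set ℂ}
    (hL : ∀ u ∈ H, ∃ z ∈ L, cexpU z = u) :
    ∃ x : Fin (qRank H) → ℂ, LinearIndependent ℚ x ∧ ∀ j, x j ∈ L ∧ cexpU (x j) ∈ H := by
  have finrank_eq : qRank H = Module.finrank ℤ (Additive H) :=
    (TensorProduct.isBaseChange ℤ (Additive H) ℚ).finrank_eq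
  obtain ⟨g, hg⟩ := exists_linearIndependent_of_le_finrank finrank_eq.le
  choose x hxL hx using fun j => hL (g j).toMul (g j).toMul.2
  exact ⟨x, linearIndependent_of_cexpU_eq hg hx, fun j => ⟨hxL j, hx j ▸ (g j).toMul.2⟩⟩

theorem exists_cexpU_eq_of_mem_greenGroup {β : ℝ} (hβ : β ≠ 0) {Q : AddSubgroup ℝ} {u : ℂˣ}
    (hu : u ∈ greenGroup (1 + β * I) Q) : ∃ z, z.re - z.im / β ∈ Q ∧ cexpU z = u := by
  obtain ⟨t, q, hq, rfl⟩ := hu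
  refine ⟨_, ?_, rfl⟩
  simpa [hβ] using hq

end GreenGroup

theorem linDim_le_linDim_add_trdeg_of_finite {K : IntermediateField ℚ ℂ} {d : ℤ}
    (hSC : ∀ (m : ℕ) (x : Fin m → ℂ),
      (linDim K (Set.range x) : ℤ) + trdeg (Set.range fun i => Complex.exp (x i))
        - linDim ℚ (Set.range x) ≥ -d) {s : Set ℂ} (hs : s.Finite) :
    (linDim ℚ s : ℤ) ≤ linDim K s + trdeg (exp '' s) + d := by
  obtain ⟨m, x, -, rfl⟩ := hs.fin_param
  have := hSC m x
  rw [← Set.range_comp, Function.comp_def]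
  omega

theorem statement0_general {β : ℝ} (hβ : β ≠ 0) {K : IntermediateField ℚ ℂ}
    (hK : (β : ℂ) * I ∈ K) (Q : AddSubgroup ℝ) [FiniteDimensional ℚ (Submodule.span ℚ (Q : Set ℝ))]
    {d : ℤ}
    (hSC : ∀ (m : ℕ) (x : Fin m → ℂ),
      (linDim K (Set.range x) : ℤ) + trdeg (Set.range fun i => Complex.exp (x i))
        - linDim ℚ (Set.range x) ≥ -d)
    {ι : Type*} [Finite ι] (y : ι → ℂˣ) :
    2 * (trdeg (Set.range fun i => (y i : ℂ)) : ℤ)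
        - qRank (divHull (Set.range y) ⊓ greenGroup (1 + β * I) Q)
      ≥ -Module.finrank ℚ (Submodule.span ℚ (Q : Set ℝ)) - d := by
  obtain ⟨x, x_indep, hx⟩ := exists_linearIndependent_cexpU_mem
    (H := divHull (Set.range y) ⊓ greenGroup (1 + β * I) Q) (L := {z | z.re - z.im / β ∈ Q})
    fun u hu => exists_cexpU_eq_of_mem_greenGroup hβ hu.2
  have x_finite := Set.finite_range x
  have linDim_x : linDim ℚ (Set.range x) = _ :=
    (finrank_span_eq_card x_indep).trans (Fintype.card_fin _)
  have linDim_le := linDim_add_linDim_union_image_conj_le hβ hK x_finite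
    (P := Submodule.span ℚ Q) (Set.forall_mem_range.mpr fun j => Submodule.subset_span (hx j).1)
  have schanuel := linDim_le_linDim_add_trdeg_of_finite hSC (x_finite.union (x_finite.image conj))
  have exp_subset : exp '' Set.range x ⊆
      (AlgebraicIndependent.matroid ℚ ℂ).closure (Set.range fun i => (y i : ℂ)) := by
    rintro _ ⟨_, ⟨j, rfl⟩, rfl⟩
    exact (Set.range_comp Units.val y) ▸ val_mem_closure_of_mem_divHull (hx j).2.1
  have trdeg_le := trdeg_union_image_conj_le_of_subset_closure (x_finite.image exp)
    (Set.finite_range _) exp_subset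
  have exp_image_conj : exp '' (conj '' Set.range x) = conj '' (exp '' Set.range x) := by
    simp only [Set.image_image, exp_conj]
  rw [Set.image_union, exp_image_conj] at schanuel
  omega

/-- assuming SC_K for K = ℚ(βi), the predimension inequality
`2 trdeg(y) − r(y) ≥ −3l − trdeg(K)` holds for every tuple `y` of nonzero
complex numbers, where `r(y) = dim_ℚ (ℚ ⊗_ℤ (D(y) ∩ G))` and
`G = exp(εℝ + Q)`. -/
theorem statement0 (β : ℝ) (hβ : β ≠ 0) (ε : ℂ) (hε : ε = 1 + β * I)
    (K : IntermediateField ℚ ℂ) (hK : K = IntermediateField.adjoin ℚ {(β : ℂ) * I})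
    (Q : AddSubgroup ℝ) (hQnt : Q ≠ ⊥)
    (hQdiv : ∀ q ∈ Q, ∀ m : ℕ, 0 < m → ∃ r ∈ Q, m • r = q)
    (l : ℕ) (hl : Module.rank ℚ (Submodule.span ℚ (Q : Set ℝ)) = l)
    (hSC : ∀ (m : ℕ) (x : Fin m → ℂ),
      (linDim K (Set.range x) : ℤ) + trdeg (Set.range fun i => Complex.exp (x i))
        - linDim ℚ (Set.range x) ≥ -(trdeg (K : Set ℂ) : ℤ)) :
    ∀ (n : ℕ), 1 ≤ n → ∀ (y : Fin n → ℂˣ),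
      2 * (trdeg (Set.range fun i => (y i : ℂ)) : ℤ)
          - (qRank (divHull (Set.range y) ⊓ greenGroup ε Q) : ℤ)
        ≥ -3 * l - trdeg (K : Set ℂ) := by
  intro n _ y
  subst hε
  have : FiniteDimensional ℚ (Submodule.span ℚ (Q : Set ℝ)) := Module.finite_of_rank_eq_nat hl
  have := statement0_general hβ (hK ▸ IntermediateField.mem_adjoin_simple_self ℚ _) Q hSC y
  rw [Module.finrank_eq_of_rank_eq hl] at this
  omega
end

section
/- Let β be a non-zero real number, let ε = 1 + βi and K = ℚ(βi), and let Q be a subgroup of (ℝ,+) whose ℚ-linear dimension l is finite. Suppose t ∈ ℝ^n, q ∈ Q^n, and the tuple x = εt + q (coordinatewise) is ℚ-linearly independent as a tuple of complex numbers. Then lin.d._ℚ(x, x̄) − lin.d._K(x, x̄) ≥ n − 3l, where x̄ denotes the coordinatewise complex conjugate of x. -/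
open Complex

/-!
The span of `x` and its conjugate is the direct sum of the spans of `Re x` and `i Im x`. For
`x = εt + q` with `Re ε` and `Im ε` non-zero, its dimension is therefore `dim r + dim t`, where
`r = Re x = (Re ε) t + q`. Over a field containing `ε` and its conjugate, both tuples lie in the
span of `t` and `q`, of dimension at most `dim t + dim q`, so the difference is at least
`dim r - dim q`. Finally `x = (ε / Re ε) r + (1 - ε / Re ε) q` gives `dim x ≤ dim r + dim q`, which
yields the bound `dim x - 2 dim q`.
-/

section SetFinrank

variable {F M M' N : Type*} [Field F] [AddCommGroup M] [Module F M]
  [AddCommGroup M'] [Module F M'] [AddCommGroup N] [Module F N]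

theorem finrank_submodule_prod (U : Submodule F M) (V : Submodule F M')
    [FiniteDimensional F U] [FiniteDimensional F V] :
    Module.finrank F (U.prod V) = Module.finrank F U + Module.finrank F V := by
  have hinj : Function.Injective (U.subtype.prodMap V.subtype) :=
    U.subtype_injective.prodMap V.subtype_injective
  rw [← Module.finrank_prod, ← LinearMap.finrank_range_of_inj hinj, LinearMap.range_prodMap,
    U.range_subtype, V.range_subtype]

theorem setFinrank_image_le (f : M →ₗ[F] N) {s : Set M} (hs : s.Finite) :
    (f '' s).finrank F ≤ s.finrank F := by
  have := FiniteDimensional.span_of_finite F hs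
  rw [Set.finrank, ← Submodule.map_span]
  exact Submodule.finrank_map_le f _

theorem setFinrank_image_of_injective {f : M →ₗ[F] N} (hf : Function.Injective f) (s : Set M) :
    (f '' s).finrank F = s.finrank F := by
  rw [Set.finrank, ← Submodule.map_span]
  exact (Submodule.equivMapOfInjective f hf _).finrank_eq.symm

theorem setFinrank_union_le {s t : Set M} (hs : s.Finite) (ht : t.Finite) :
    (s ∪ t).finrank F ≤ s.finrank F + t.finrank F := by
  have := FiniteDimensional.span_of_finite F hs
  have := FiniteDimensional.span_of_finite F ht
  rw [Set.finrank, Submodule.span_union]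
  exact Submodule.finrank_add_le_finrank_add_finrank _ _

theorem setFinrank_image_union_image_le (f : M →ₗ[F] N) (g : M' →ₗ[F] N) {s : Set M} {t : Set M'}
    (hs : s.Finite) (ht : t.Finite) :
    (f '' s ∪ g '' t).finrank F ≤ s.finrank F + t.finrank F :=
  (setFinrank_union_le (hs.image f) (ht.image g)).trans
    (add_le_add (setFinrank_image_le f hs) (setFinrank_image_le g ht))

theorem setFinrank_le_setFinrank_of_subset_span {K : Type*} [Field K] [Algebra F K] [Module K M]
    [IsScalarTower F K M] {s t : Set M} (ht : t.Finite) (hst : s ⊆ Submodule.span K t) :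
    s.finrank K ≤ t.finrank F := by
  obtain ⟨b, hbt, hspan, hb⟩ := exists_linearIndependent K t
  have : Fintype b := (ht.subset hbt).fintype
  have := FiniteDimensional.span_of_finite K ht
  have := FiniteDimensional.span_of_finite F ht
  have hbF : LinearIndependent F ((↑) : b → M) := hb.restrict_scalars' F
  calc s.finrank K ≤ t.finrank K := Submodule.finrank_mono (Submodule.span_le.2 hst)
    _ = b.finrank K := by rw [Set.finrank, Set.finrank, hspan]
    _ = b.finrank F :=
      (finrank_span_set_eq_card hb).trans (finrank_span_set_eq_card hbF).symm
    _ ≤ t.finrank F := Submodule.finrank_mono (Submodule.span_mono hbt)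

end SetFinrank

section ComplexTuples

open scoped ComplexConjugate

variable {F : Type*} [Field F] [Algebra F ℝ] [Algebra F ℂ] [IsScalarTower F ℝ ℂ]

theorem map_equivRealProd_span_union_conj (s : Set ℂ) :
    (Submodule.span F (s ∪ conj '' s)).map (equivRealProdLm.restrictScalars F).toLinearMap
      = (Submodule.span F (re '' s)).prod (Submodule.span F (im '' s)) := by
  have : CharZero F := (algebraMap F ℝ).charZero
  apply le_antisymm
  · rw [Submodule.map_span_le]
    rintro _ (hz | ⟨z, hz, rfl⟩)
    · exact ⟨Submodule.subset_span ⟨_, hz, rfl⟩, Submodule.subset_span ⟨_, hz, rfl⟩⟩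
    · exact ⟨Submodule.subset_span ⟨z, hz, rfl⟩, neg_mem (Submodule.subset_span ⟨z, hz, rfl⟩)⟩
  · have mem_map {w : ℂ} (hw : w ∈ s ∪ conj '' s) : (w.re, w.im) ∈ _ :=
      Submodule.mem_map_of_mem (f := (equivRealProdLm.restrictScalars F).toLinearMap)
        (Submodule.subset_span (R := F) hw)
    rw [Submodule.prod_le_iff, Submodule.map_span_le, Submodule.map_span_le]
    constructor <;> rintro _ ⟨z, hz, rfl⟩
    · have h := add_mem (mem_map (.inl hz)) (mem_map (.inr ⟨z, hz, rfl⟩))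
      rw [← Submodule.smul_mem_iff _ (two_ne_zero' F)]
      convert h using 1
      simp [two_smul]
    · have h := sub_mem (mem_map (.inl hz)) (mem_map (.inr ⟨z, hz, rfl⟩))
      rw [← Submodule.smul_mem_iff _ (two_ne_zero' F)]
      convert h using 1
      simp [two_smul]

theorem linDim_union_conj {s : Set ℂ} (hs : s.Finite) :
    linDim F (s ∪ conj '' s) = (re '' s).finrank F + (im '' s).finrank F := by
  have := FiniteDimensional.span_of_finite F (hs.image re)
  have := FiniteDimensional.span_of_finite F (hs.image im)
  rw [linDim, ← LinearEquiv.finrank_map_eq (equivRealProdLm.restrictScalars F),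
    map_equivRealProd_span_union_conj, finrank_submodule_prod]
  rfl

variable {ι : Type*} [Finite ι] {ε : ℂ} (t q : ι → ℝ) {x : ι → ℂ}

theorem linDim_range_le_finrank_re_add (hre : ε.re ≠ 0) (hx : ∀ i, x i = ε * t i + q i) :
    linDim F (Set.range x) ≤
      (Set.range fun i ↦ ε.re * t i + q i).finrank F + (Set.range q).finrank F := by
  let smulRight (c : ℂ) : ℝ →ₗ[F] ℂ := (LinearMap.toSpanSingleton ℝ ℂ c).restrictScalars F
  have hsplit (i : ι) : x i =
      smulRight (ε / ε.re) (ε.re * t i + q i) + smulRight (1 - ε / ε.re) (q i) := by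
    have hre' : (ε.re : ℂ) ≠ 0 := ofReal_ne_zero.2 hre
    simp only [smulRight, LinearMap.restrictScalars_apply, LinearMap.toSpanSingleton_apply,
      real_smul, ofReal_add, ofReal_mul, hx]
    field_simp
    ring
  refine (setFinrank_le_setFinrank_of_subset_span ?_ ?_).trans
    (setFinrank_image_union_image_le (smulRight (ε / ε.re)) (smulRight (1 - ε / ε.re))
      (Set.finite_range _) (Set.finite_range _))
  · exact ((Set.finite_range _).image _).union ((Set.finite_range _).image _)
  · rintro _ ⟨i, rfl⟩
    rw [hsplit]
    exact add_mem (Submodule.subset_span (.inl ⟨_, ⟨i, rfl⟩, rfl⟩))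
      (Submodule.subset_span (.inr ⟨_, ⟨i, rfl⟩, rfl⟩))

theorem linDim_range_union_conj (him : ε.im ≠ 0) (hx : ∀ i, x i = ε * t i + q i) :
    linDim F (Set.range x ∪ Set.range fun i ↦ conj (x i)) =
      (Set.range fun i ↦ ε.re * t i + q i).finrank F + (Set.range t).finrank F := by
  have hinj : Function.Injective (LinearMap.mulLeft F ε.im) := mul_right_injective₀ him
  have hreal : re '' Set.range x = Set.range fun i ↦ ε.re * t i + q i := by
    simp [← Set.range_comp, Function.comp_def, hx]
  have himag : im '' Set.range x = LinearMap.mulLeft F ε.im '' Set.range t := by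
    simp [← Set.range_comp, Function.comp_def, hx]
  rw [Set.range_comp' conj x, linDim_union_conj (Set.finite_range x), hreal, himag,
    setFinrank_image_of_injective hinj]

theorem linDim_intermediateField_range_union_conj_le (K : IntermediateField F ℂ) (hε : ε ∈ K)
    (hεconj : conj ε ∈ K) (hx : ∀ i, x i = ε * t i + q i) :
    linDim K (Set.range x ∪ Set.range fun i ↦ conj (x i)) ≤
      (Set.range t).finrank F + (Set.range q).finrank F := by
  let ofRealF : ℝ →ₗ[F] ℂ := ofRealAm.toLinearMap.restrictScalars F
  refine (setFinrank_le_setFinrank_of_subset_span ?_ ?_).trans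
    (setFinrank_image_union_image_le ofRealF ofRealF (Set.finite_range t) (Set.finite_range q))
  · exact ((Set.finite_range _).image _).union ((Set.finite_range _).image _)
  · have mul_add_mem {c : ℂ} (hc : c ∈ K) (i : ι) : c * t i + q i ∈
        Submodule.span K (ofRealF '' Set.range t ∪ ofRealF '' Set.range q) :=
      add_mem (Submodule.smul_mem _ (⟨c, hc⟩ : K)
          (Submodule.subset_span (.inl ⟨_, ⟨i, rfl⟩, rfl⟩)))
        (Submodule.subset_span (.inr ⟨_, ⟨i, rfl⟩, rfl⟩))
    rintro _ (⟨i, rfl⟩ | ⟨i, rfl⟩)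
    · simpa only [SetLike.mem_coe, hx] using mul_add_mem hε i
    · simpa only [SetLike.mem_coe, hx, map_add, map_mul, conj_ofReal] using mul_add_mem hεconj i

theorem statement1_general (K : IntermediateField F ℂ) (hε : ε ∈ K) (hεconj : conj ε ∈ K)
    (hre : ε.re ≠ 0) (him : ε.im ≠ 0) (hx : ∀ i, x i = ε * t i + q i) :
    (linDim F (Set.range x ∪ Set.range fun i ↦ conj (x i)) : ℤ)
        - linDim K (Set.range x ∪ Set.range fun i ↦ conj (x i))
      ≥ (linDim F (Set.range x) : ℤ) - 2 * (Set.range q).finrank F := by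
  have hF := linDim_range_union_conj (F := F) t q him hx
  have hK := linDim_intermediateField_range_union_conj_le t q K hε hεconj hx
  have hx' := linDim_range_le_finrank_re_add (F := F) t q hre hx
  lia

end ComplexTuples

/-- for `x = εt + q` with `t` real, `q ∈ Q^n` and `x`
ℚ-linearly independent, `lin.d._ℚ(x, x̄) − lin.d._K(x, x̄) ≥ n − 3l`. -/
theorem statement1 (β : ℝ) (hβ : β ≠ 0) (ε : ℂ) (hε : ε = 1 + β * I)
    (K : IntermediateField ℚ ℂ) (hK : K = IntermediateField.adjoin ℚ {(β : ℂ) * I})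
    (Q : AddSubgroup ℝ) (l : ℕ)
    (hl : Module.rank ℚ (Submodule.span ℚ (Q : Set ℝ)) = l)
    (n : ℕ) (t : Fin n → ℝ) (q : Fin n → ℝ) (hq : ∀ i, q i ∈ Q)
    (x : Fin n → ℂ) (hx : ∀ i, x i = ε * t i + q i)
    (hind : LinearIndependent ℚ x) :
    (linDim ℚ (Set.range x ∪ Set.range fun i => (starRingEnd ℂ) (x i)) : ℤ)
        - linDim K (Set.range x ∪ Set.range fun i => (starRingEnd ℂ) (x i))
      ≥ (n : ℤ) - 3 * l := by
  have hβK : (β : ℂ) * I ∈ K := hK ▸ IntermediateField.mem_adjoin_simple_self ℚ _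
  have hεK : ε ∈ K := hε ▸ K.add_mem K.one_mem hβK
  have hεconjK : starRingEnd ℂ ε ∈ K := by
    simpa [hε, sub_eq_add_neg] using K.sub_mem K.one_mem hβK
  have hn : linDim ℚ (Set.range x) = n := (finrank_span_eq_card hind).trans (Fintype.card_fin n)
  have hql : (Set.range q).finrank ℚ ≤ l := by
    have : FiniteDimensional ℚ (Submodule.span ℚ (Q : Set ℝ)) :=
      Module.rank_lt_aleph0_iff.1 (hl ▸ Cardinal.natCast_lt_aleph0)
    rw [← Module.finrank_eq_of_rank_eq hl]
    exact Submodule.finrank_mono (Submodule.span_mono (Set.range_subset_iff.2 hq))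
  have := statement1_general t q K hεK hεconjK (by simp [hε]) (by simpa [hε] using hβ) hx
  lia
end

section
/- Assume the Schanuel Conjecture: for every n and every ℚ-linearly independent tuple x ∈ ℂ^n, trdeg(x, exp(x)) ≥ n. Let K be a subfield of ℂ of finite transcendence degree over ℚ. Then for every finite tuple x of complex numbers, lin.d._K(x) + trdeg(exp(x)) − lin.d._ℚ(x) ≥ −trdeg(K). -/
open Complex

/-!
Let `rk` denote rank in the algebraic-independence matroid of `L / F`. Every `K`-linear combination
of `c` is algebraic over `K ∪ c`, so the `K`-span of `s` has rank at most `rk K + lin.d._K(s)`.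
The Schanuel property of `f`, applied to an `F`-basis `b ⊆ s` of the `F`-span of `s`, gives
`lin.d._F(s) ≤ rk (b ∪ f(b))`, where `b` lies in the `K`-span of `s` and `f(b)` in `f(s)`.
-/

open AlgebraicIndependent (matroid matroid_closure_eq matroid_indep_iff)

section ENatCuts

variable {e : ℕ∞}

lemma bddAbove_setOf_natCast_le_iff : BddAbove {k : ℕ | (k : ℕ∞) ≤ e} ↔ e ≠ ⊤ := by
  cases e with
  | top => simp
  | coe n => exact iff_of_true ⟨n, fun k hk => by simpa using hk⟩ (ENat.natCast_ne_top n)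

lemma sSup_setOf_natCast_le : sSup {k : ℕ | (k : ℕ∞) ≤ e} = e.toNat := by
  cases e with
  | top => simp
  | coe n => exact IsGreatest.csSup_eq ⟨by simp, fun k hk => by simpa using hk⟩

end ENatCuts

section AlgebraicMatroid

variable {R A : Type*} [CommRing R] [CommRing A] [Algebra R A] [FaithfulSMul R A]

lemma natCast_le_eRk_matroid_iff [NoZeroDivisors A] {s : Set A} {k : ℕ} :
    (k : ℕ∞) ≤ (matroid R A).eRk s ↔ ∃ t : Finset A, ↑t ⊆ s ∧ t.card = k ∧
      AlgebraicIndependent R (fun x : {y : A // y ∈ t} => (x : A)) := by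
  rw [Matroid.le_eRk_iff]
  constructor
  · rintro ⟨t, hts, ht, hcard⟩
    lift t to Finset A using Set.finite_of_encard_eq_coe hcard
    rw [Set.encard_coe_eq_coe_finsetCard, Nat.cast_inj] at hcard
    exact ⟨t, hts, hcard, matroid_indep_iff.1 ht⟩
  · rintro ⟨t, hts, rfl, ht⟩
    exact ⟨t, hts, matroid_indep_iff.2 ht, Set.encard_coe_eq_coe_finsetCard t⟩

lemma span_subset_matroid_closure [IsDomain A] (S : Subalgebra R A) (s : Set A) :
    (Submodule.span S s : Set A) ⊆ (matroid R A).closure (S ∪ s) := by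
  have hsub : (S ∪ s : Set A) ⊆ (matroid R A).closure (S ∪ s) :=
    (matroid R A).subset_closure _ (Set.subset_univ _)
  rw [matroid_closure_eq] at hsub ⊢
  intro z hz
  induction hz using Submodule.span_induction with
  | mem z hz => exact hsub (Or.inr hz)
  | zero => exact zero_mem _
  | add y z _ _ hy hz => exact add_mem hy hz
  | smul a z _ hz => exact mul_mem (hsub (Or.inl a.2)) hz

lemma eRk_matroid_span_le {F L : Type*} [Field F] [Field L] [Algebra F L]
    (K : IntermediateField F L) (s : Set L) [Module.Finite K (Submodule.span K s)] :
    (matroid F L).eRk (Submodule.span K s) ≤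
      (matroid F L).eRk K + Module.finrank K (Submodule.span K s) := by
  obtain ⟨c, -, hcard, hspan, -⟩ := Submodule.exists_finset_span_eq_linearIndepOn K s
  have hsub : (Submodule.span K s : Set L) ⊆ (matroid F L).closure (K ∪ c) :=
    hspan ▸ span_subset_matroid_closure K.toSubalgebra (c : Set L)
  calc (matroid F L).eRk (Submodule.span K s)
      ≤ (matroid F L).eRk ((matroid F L).closure (K ∪ c)) :=
        (matroid F L).eRk_mono hsub
    _ = (matroid F L).eRk (K ∪ c) := (matroid F L).eRk_closure_eq _
    _ ≤ (matroid F L).eRk K + (c : Set L).encard := (matroid F L).eRk_union_le_eRk_add_encard _ _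
    _ = (matroid F L).eRk K + Module.finrank K (Submodule.span K s) := by
        rw [Set.encard_coe_eq_coe_finsetCard, hcard]

end AlgebraicMatroid

theorem statement4_general {F L : Type*} [Field F] [Field L] [Algebra F L] (f : L → L)
    (hf : ∀ (n : ℕ) (b : Fin n → L), LinearIndependent F b →
      n ≤ (matroid F L).eRk (Set.range b ∪ Set.range fun i => f (b i)))
    (K : IntermediateField F L) {s : Set L} (hs : s.Finite) :
    (Module.finrank F (Submodule.span F s) : ℕ∞) ≤
      (matroid F L).eRk K + Module.finrank K (Submodule.span K s) + (matroid F L).eRk (f '' s) := by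
  have := FiniteDimensional.span_of_finite F hs
  have := FiniteDimensional.span_of_finite K hs
  obtain ⟨b, hbs, -, hb⟩ := Submodule.exists_fun_fin_finrank_span_eq F s
  have hsub : (Set.range b ∪ Set.range fun i => f (b i)) ⊆ Submodule.span K s ∪ f '' s :=
    Set.union_subset_union
      (Set.range_subset_iff.2 fun i => Submodule.subset_span (hbs i))
      (Set.range_subset_iff.2 fun i => Set.mem_image_of_mem f (hbs i))
  calc (Module.finrank F (Submodule.span F s) : ℕ∞)
      ≤ (matroid F L).eRk (Set.range b ∪ Set.range fun i => f (b i)) := hf _ b hb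
    _ ≤ (matroid F L).eRk (Submodule.span K s ∪ f '' s) := (matroid F L).eRk_mono hsub
    _ ≤ (matroid F L).eRk (Submodule.span K s) + (matroid F L).eRk (f '' s) :=
        (matroid F L).eRk_union_le_eRk_add_eRk _ _
    _ ≤ (matroid F L).eRk K + Module.finrank K (Submodule.span K s) +
          (matroid F L).eRk (f '' s) := by
        gcongr
        exact eRk_matroid_span_le K s

section Trdeg

variable {s : Set ℂ}

-- When the rank is infinite, both sides take the junk value `0`.
lemma trdeg_eq_toNat_eRk_matroid : trdeg s = ((matroid ℚ ℂ).eRk s).toNat := by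
  simp only [trdeg, ← natCast_le_eRk_matroid_iff, sSup_setOf_natCast_le]

lemma natCast_trdeg_of_bddAbove
    (hs : BddAbove {k : ℕ | ∃ t : Finset ℂ, ↑t ⊆ s ∧ t.card = k ∧
      AlgebraicIndependent ℚ (fun x : {y : ℂ // y ∈ t} => (x : ℂ))}) :
    (trdeg s : ℕ∞) = (matroid ℚ ℂ).eRk s := by
  simp only [← natCast_le_eRk_matroid_iff, bddAbove_setOf_natCast_le_iff] at hs
  rw [trdeg_eq_toNat_eRk_matroid, ENat.natCast_toNat hs]

lemma natCast_trdeg_of_finite (hs : s.Finite) : (trdeg s : ℕ∞) = (matroid ℚ ℂ).eRk s := by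
  have hfin : (matroid ℚ ℂ).eRk s < ⊤ := ((matroid ℚ ℂ).isRkFinite_of_finite hs).eRk_lt_top
  rw [trdeg_eq_toNat_eRk_matroid, ENat.natCast_toNat hfin.ne]

end Trdeg

/-- the Schanuel Conjecture implies the Schanuel Conjecture for
raising to powers in any subfield `K` of ℂ of finite transcendence degree:
`lin.d._K(x) + trdeg(exp x) − lin.d._ℚ(x) ≥ −trdeg(K)`. -/
theorem statement4
    (hSC : ∀ (n : ℕ) (x : Fin n → ℂ), LinearIndependent ℚ x →
      trdeg (Set.range x ∪ Set.range fun i => Complex.exp (x i)) ≥ n)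
    (K : IntermediateField ℚ ℂ)
    (htd : BddAbove {k : ℕ | ∃ t : Finset ℂ, ↑t ⊆ (K : Set ℂ) ∧ t.card = k ∧
      AlgebraicIndependent ℚ (fun x : {y : ℂ // y ∈ t} => (x : ℂ))}) :
    ∀ (m : ℕ) (x : Fin m → ℂ),
      (linDim K (Set.range x) : ℤ) + trdeg (Set.range fun i => Complex.exp (x i))
          - linDim ℚ (Set.range x)
        ≥ -(trdeg (K : Set ℂ) : ℤ) := by
  intro m x
  have schanuel : ∀ (n : ℕ) (b : Fin n → ℂ), LinearIndependent ℚ b →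
      n ≤ (matroid ℚ ℂ).eRk (Set.range b ∪ Set.range fun i => Complex.exp (b i)) := by
    intro n b hb
    rw [← natCast_trdeg_of_finite ((Set.finite_range b).union (Set.finite_range _))]
    exact_mod_cast hSC n b hb
  have key := statement4_general Complex.exp schanuel K (Set.finite_range x)
  rw [← Set.range_comp', ← natCast_trdeg_of_bddAbove htd,
    ← natCast_trdeg_of_finite (Set.finite_range _)] at key
  have key_nat : linDim ℚ (Set.range x) ≤ trdeg (K : Set ℂ) + linDim K (Set.range x) +
      trdeg (Set.range fun i => Complex.exp (x i)) := by
    exact_mod_cast key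
  lia
end

section
/- Let K be a subfield of ℂ and let D be a subset of ℂ containing K. Then for every finite tuple x of complex numbers, δ_K(x/D) ≥ δ_exp(x/D); that is, lin.d._K(x/D) + trdeg(exp(x)/exp(D)) − lin.d._ℚ(x/D) ≥ trdeg(x, exp(x) / D ∪ exp(D)) − lin.d._ℚ(x/D), equivalently lin.d._K(x/D) + trdeg(exp(x)/exp(D)) ≥ trdeg(x, exp(x) / D ∪ exp(D)). -/
open Complex

noncomputable section

/-- `F`-linear dimension of `s` over `B`: the dimension of the image of the
`F`-span of `s` in the quotient of ℂ by the `F`-span of `B`. -/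
def linDimOver (F : Type*) [Field F] [Algebra F ℂ] (B s : Set ℂ) : ℕ :=
  Module.finrank F ((Submodule.span F s).map (Submodule.span F B).mkQ)

/-- Transcendence degree of ℚ(C)(s) over ℚ(C): the size of the largest finite
subset of `s` algebraically independent over ℚ(C). -/
def trdegOver (C s : Set ℂ) : ℕ :=
  sSup {k : ℕ | ∃ t : Finset ℂ, ↑t ⊆ s ∧ t.card = k ∧
    AlgebraicIndependent (IntermediateField.adjoin ℚ C) (fun x : {y : ℂ // y ∈ t} => (x : ℂ))}

end

/-!
The transcendence degree is subadditive and can only drop when the base grows, so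
`trdeg(x, exp x / D ∪ exp D)` is at most `trdeg(x / D ∪ exp D) + trdeg(exp x / exp D)`. The first
summand is at most `lin.d._K(x / D)`: as `K` and `D` lie in `ℚ(D ∪ exp D)`, a `K`-linear relation
modulo `D` is a polynomial relation of degree one over that field.
-/

section AlgebraicIndependence

variable {ι L A : Type*} [CommRing L] [CommRing A] [Algebra L A] {x : ι → A}

theorem disjoint_span_range_one_of_algebraicIndependent (hx : AlgebraicIndependent L x) :
    Disjoint (Submodule.span L (Set.range x)) 1 := by
  refine Submodule.disjoint_def.2 fun z hz hz' => ?_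
  have map_span_X : (Submodule.span L (Set.range MvPolynomial.X)).map
      (MvPolynomial.aeval x : MvPolynomial ι L →ₐ[L] A).toLinearMap =
        Submodule.span L (Set.range x) := by
    simp [Submodule.map_span, ← Set.range_comp, Function.comp_def]
  obtain ⟨p, hp, rfl⟩ := map_span_X.ge hz
  obtain ⟨r, hr⟩ := Submodule.mem_one.1 hz'
  have p_eq_C : p = MvPolynomial.C r := hx <| by simpa using hr.symm
  have coeff_zero : p ∈ LinearMap.ker (MvPolynomial.lcoeff L 0) :=
    Submodule.span_le.2 (by rintro _ ⟨i, rfl⟩; simp) hp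
  have r_eq_zero : r = 0 := by simpa [p_eq_C] using coeff_zero
  simp [p_eq_C, r_eq_zero]

theorem linearIndependent_mkQ_of_algebraicIndependent {K : Type*} [CommRing K] [Algebra K L]
    [Module K A] [IsScalarTower K L A] [FaithfulSMul K L]
    (hx : AlgebraicIndependent L x) {W : Submodule K A}
    (hW : W ≤ (1 : Submodule L A).restrictScalars K) : LinearIndependent K (W.mkQ ∘ x) := by
  refine (hx.linearIndependent.restrict_scalars' K).map ?_
  rw [Submodule.ker_mkQ, Submodule.disjoint_def]
  exact fun z hz hzW => Submodule.disjoint_def.1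
    (disjoint_span_range_one_of_algebraicIndependent hx) z
    (Submodule.span_le_restrictScalars K L _ hz) (hW hzW)

end AlgebraicIndependence

section LinDimOver

variable {F : Type*} [Field F] [Algebra F ℂ] {B s : Set ℂ} {t : Finset ℂ}

theorem card_le_linDimOver (hs : s.Finite) (hts : ↑t ⊆ s)
    (ht : LinearIndependent F ((Submodule.span F B).mkQ ∘ ((↑) : t → ℂ))) :
    t.card ≤ linDimOver F B s := by
  have span_le : Submodule.span F (Set.range ((Submodule.span F B).mkQ ∘ ((↑) : t → ℂ))) ≤
      (Submodule.span F s).map (Submodule.span F B).mkQ := by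
    rw [Submodule.map_span, Set.range_comp]
    exact Submodule.span_mono (Set.image_mono (by simpa using hts))
  have : Module.Finite F (Submodule.span F s) := .span_of_finite F hs
  calc t.card = Module.finrank F (Submodule.span F (Set.range _)) := by
        rw [finrank_span_eq_card ht, Fintype.card_coe]
    _ ≤ linDimOver F B s := Submodule.finrank_mono span_le

end LinDimOver

section TrdegOver

variable {C s : Set ℂ}

theorem trdegOver_le {n : ℕ} (h : ∀ t : Finset ℂ, ↑t ⊆ s →
      AlgebraicIndependent (IntermediateField.adjoin ℚ C) ((↑) : t → ℂ) → t.card ≤ n) :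
    trdegOver C s ≤ n :=
  csSup_le' (by rintro _ ⟨t, hts, rfl, ht⟩; exact h t hts ht)

theorem card_le_trdegOver {t : Finset ℂ} (hs : s.Finite) (hts : ↑t ⊆ s)
    (ht : AlgebraicIndependent (IntermediateField.adjoin ℚ C) ((↑) : t → ℂ)) :
    t.card ≤ trdegOver C s := by
  refine le_csSup ⟨hs.toFinset.card, ?_⟩ ⟨t, hts, rfl, ht⟩
  rintro _ ⟨u, hus, rfl, -⟩
  exact Finset.card_le_card (hs.subset_toFinset.2 hus)

theorem trdegOver_union_le {u : Set ℂ} (hs : s.Finite) (hu : u.Finite) :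
    trdegOver C (s ∪ u) ≤ trdegOver C s + trdegOver C u := by
  classical
  refine trdegOver_le fun t htsu ht => ?_
  have hts : ↑{z ∈ t | z ∈ s} ⊆ s := fun z hz => (Finset.mem_filter.1 hz).2
  have htu : ↑{z ∈ t | z ∉ s} ⊆ u := fun z hz =>
    (htsu (Finset.mem_of_mem_filter z hz)).resolve_left (Finset.mem_filter.1 hz).2
  calc t.card = {z ∈ t | z ∈ s}.card + {z ∈ t | z ∉ s}.card :=
        (t.card_filter_add_card_filter_not _).symm
    _ ≤ trdegOver C s + trdegOver C u :=
        add_le_add (card_le_trdegOver hs hts (ht.mono (t.filter_subset _)))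
          (card_le_trdegOver hu htu (ht.mono (t.filter_subset _)))

theorem trdegOver_anti {C' : Set ℂ} (hC : C ⊆ C') (hs : s.Finite) :
    trdegOver C' s ≤ trdegOver C s := by
  refine trdegOver_le fun t hts ht => card_le_trdegOver hs hts ?_
  let inclusion := IntermediateField.inclusion (IntermediateField.adjoin.mono ℚ C C' hC)
  let _ := inclusion.toAlgebra
  have : IsScalarTower (IntermediateField.adjoin ℚ C) (IntermediateField.adjoin ℚ C') ℂ :=
    .of_algebraMap_eq fun _ => rfl
  exact ht.restrictScalars inclusion.injective

theorem trdegOver_le_linDimOver {K : IntermediateField ℚ ℂ} {D : Set ℂ}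
    (hK : K ≤ IntermediateField.adjoin ℚ C) (hD : D ⊆ IntermediateField.adjoin ℚ C)
    (hs : s.Finite) : trdegOver C s ≤ linDimOver K D s := by
  refine trdegOver_le fun t hts ht => card_le_linDimOver hs hts ?_
  let inclusion := IntermediateField.inclusion hK
  let _ := inclusion.toAlgebra
  have : IsScalarTower K (IntermediateField.adjoin ℚ C) ℂ := .of_algebraMap_eq fun _ => rfl
  have : FaithfulSMul K (IntermediateField.adjoin ℚ C) :=
    (faithfulSMul_iff_algebraMap_injective _ _).2 inclusion.injective
  refine linearIndependent_mkQ_of_algebraicIndependent ht (Submodule.span_le.2 fun d hd => ?_)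
  exact Submodule.mem_one.2 ⟨⟨d, hD hd⟩, rfl⟩

end TrdegOver

theorem statement5_general {K : IntermediateField ℚ ℂ} {C D X Y : Set ℂ}
    (hK : K ≤ IntermediateField.adjoin ℚ (D ∪ C)) (hX : X.Finite) (hY : Y.Finite) :
    trdegOver (D ∪ C) (X ∪ Y) ≤ linDimOver K D X + trdegOver C Y := by
  have hD : D ⊆ IntermediateField.adjoin ℚ (D ∪ C) :=
    Set.subset_union_left.trans (IntermediateField.subset_adjoin ℚ _)
  calc trdegOver (D ∪ C) (X ∪ Y)
      ≤ trdegOver (D ∪ C) X + trdegOver (D ∪ C) Y := trdegOver_union_le hX hY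
    _ ≤ linDimOver K D X + trdegOver C Y :=
        add_le_add (trdegOver_le_linDimOver hK hD hX) (trdegOver_anti Set.subset_union_right hY)

/-- for a subfield `K` of ℂ and `D ⊆ ℂ` with `K ⊆ D`, for every
finite tuple `x` of complex numbers, `δ_K(x/D) ≥ δ_exp(x/D)`; equivalently
`lin.d._K(x/D) + trdeg(exp x / exp D) ≥ trdeg(x, exp x / D ∪ exp D)`. -/
theorem statement5 (K : IntermediateField ℚ ℂ) (D : Set ℂ) (hKD : (K : Set ℂ) ⊆ D) :
    ∀ (n : ℕ) (x : Fin n → ℂ),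
      linDimOver K D (Set.range x)
          + trdegOver (Complex.exp '' D) (Set.range fun i => Complex.exp (x i))
        ≥ trdegOver (D ∪ Complex.exp '' D)
            (Set.range x ∪ Set.range fun i => Complex.exp (x i)) := by
  have hK : K ≤ IntermediateField.adjoin ℚ (D ∪ Complex.exp '' D) :=
    hKD.trans (Set.subset_union_left.trans (IntermediateField.subset_adjoin ℚ _))
  exact fun n x => statement5_general hK (Set.finite_range x) (Set.finite_range _)
end

section
/- Let β be a non-zero real number and let s ∈ ℝ^n. Define L_s = {(x, x̄) ∈ ℂ^n × ℂ^n : (x + x̄) + β⁻¹i(x − x̄) = 2s (coordinatewise)}. Let (m¹,n¹),…,(m^k,n^k) ∈ ℤ^{2n} be linearly independent vectors (with m^i, n^i ∈ ℤ^n), and let M : ℂ^{2n} → ℂ^k be the linear map sending (x, x̄) to the tuple (m^i·x + n^i·x̄)_{i=1,…,k}. Then the image M(L_s) is a coset of a ℂ-linear subspace of ℂ^k whose complex dimension d satisfies 2d ≥ k. -/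
/-!
The direction `L₀` of `L_s` is given by `a x + ā x̄ = 0` with `a = 1 + β⁻¹i`, so that its
coordinatewise conjugate is `ā x + a x̄ = 0`. As `a² ≠ ā²`, these two subspaces span `ℂⁿ × ℂⁿ`.
The map `M` has real coefficients, so it commutes with conjugation, and `M(ℂⁿ × ℂⁿ)` is the sum of
`M(L₀)` and its conjugate, which has the same dimension. Hence `k = rank M ≤ 2 dim M(L₀)`.
-/

open Complex

section StarSubmodule

variable {R E F : Type*} [CommSemiring R] [StarRing R]
  [AddCommMonoid E] [StarAddMonoid E] [Module R E] [StarModule R E]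
  [AddCommMonoid F] [StarAddMonoid F] [Module R F] [StarModule R F]

/-- The conjugate `{star x | x ∈ W}` of a submodule `W`. -/
def starSubmodule (W : Submodule R E) : Submodule R E :=
  W.map (starLinearEquiv R : E ≃ₗ⋆[R] E).toLinearMap

@[simp]
lemma mem_starSubmodule {W : Submodule R E} {x : E} : x ∈ starSubmodule W ↔ star x ∈ W :=
  Submodule.mem_map_equiv (e := (starLinearEquiv R : E ≃ₗ⋆[R] E)) W

lemma finrank_starSubmodule (W : Submodule R E) :
    Module.finrank R (starSubmodule W) = Module.finrank R W := by
  have rank_eq : Module.rank R W = Module.rank R (starSubmodule W) :=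
    rank_eq_of_equiv_equiv star ((starLinearEquiv R : E ≃ₗ⋆[R] E).submoduleMap W).toAddEquiv
      star_involutive.bijective fun c w => Subtype.ext (star_smul c (w : E))
  rw [Module.finrank, Module.finrank, rank_eq]

lemma map_starSubmodule {f : E →ₗ[R] F} (hf : ∀ x, f (star x) = star (f x))
    (W : Submodule R E) : (starSubmodule W).map f = starSubmodule (W.map f) := by
  ext y
  simp only [Submodule.mem_map, mem_starSubmodule]
  constructor
  · rintro ⟨x, hx, rfl⟩
    exact ⟨star x, hx, hf x⟩
  · rintro ⟨x, hx, hxy⟩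
    exact ⟨star x, by rwa [star_star], by rw [hf, hxy, star_star]⟩

end StarSubmodule

lemma finrank_range_le_two_mul_finrank_map {K E F : Type*} [Field K] [StarRing K]
    [AddCommGroup E] [StarAddMonoid E] [Module K E] [StarModule K E] [FiniteDimensional K E]
    [AddCommGroup F] [StarAddMonoid F] [Module K F] [StarModule K F]
    {f : E →ₗ[K] F} (hf : ∀ x, f (star x) = star (f x))
    {W : Submodule K E} (hW : W ⊔ starSubmodule W = ⊤) :
    Module.finrank K (LinearMap.range f) ≤ 2 * Module.finrank K (W.map f) :=
  calc Module.finrank K (LinearMap.range f)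
      = Module.finrank K ↥(W.map f ⊔ (starSubmodule W).map f) := by
        rw [← Submodule.map_sup, hW, LinearMap.range_eq_map]
    _ ≤ Module.finrank K (W.map f) + Module.finrank K ((starSubmodule W).map f) :=
        Submodule.finrank_add_le_finrank_add_finrank _ _
    _ = 2 * Module.finrank K (W.map f) := by
        rw [map_starSubmodule hf, finrank_starSubmodule, two_mul]

/-- The linear map `(x, y) ↦ a x + b y`. The set `L_s` is a fibre of it for `a = 1 + β⁻¹i` and
`b = 1 - β⁻¹i`. -/
def pairForm {R : Type*} (E : Type*) [CommSemiring R] [AddCommMonoid E] [Module R E] (a b : R) :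
    E × E →ₗ[R] E :=
  a • LinearMap.fst R E E + b • LinearMap.snd R E E

@[simp]
lemma pairForm_apply {R E : Type*} [CommSemiring R] [AddCommMonoid E] [Module R E] (a b : R)
    (p : E × E) : pairForm E a b p = a • p.1 + b • p.2 :=
  rfl

lemma ker_pairForm_sup_ker_pairForm {K E : Type*} [Field K] [AddCommGroup E] [Module K E]
    {a b c d : K} (h : a * d ≠ b * c) :
    LinearMap.ker (pairForm E a b) ⊔ LinearMap.ker (pairForm E c d) = ⊤ := by
  have det_ne_zero : a * d - b * c ≠ 0 := sub_ne_zero.mpr h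
  refine eq_top_iff.mpr fun p _ => ?_
  -- `u` and `v` solve `p = (b u, -a u) + (d v, -c v)` by Cramer's rule.
  let u : E := -(a * d - b * c)⁻¹ • (c • p.1 + d • p.2)
  let v : E := (a * d - b * c)⁻¹ • (a • p.1 + b • p.2)
  refine Submodule.mem_sup.mpr ⟨(b • u, -a • u), ?_, (d • v, -c • v), ?_, ?_⟩
  · rw [LinearMap.mem_ker, pairForm_apply]
    module
  · rw [LinearMap.mem_ker, pairForm_apply]
    module
  · ext
    · simp only [u, v, Prod.mk_add_mk]
      match_scalars <;> field_simp <;> ring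
    · simp only [u, v, Prod.mk_add_mk]
      match_scalars <;> field_simp <;> ring

lemma starSubmodule_ker_pairForm {R E : Type*} [CommSemiring R] [StarRing R]
    [AddCommMonoid E] [StarAddMonoid E] [Module R E] [StarModule R E] (a b : R) :
    starSubmodule (LinearMap.ker (pairForm E a b)) =
      LinearMap.ker (pairForm E (star a) (star b)) := by
  ext p
  rw [mem_starSubmodule, LinearMap.mem_ker, LinearMap.mem_ker, ← star_eq_zero]
  simp

lemma image_fiber_eq_add_map_ker {R E F G : Type*} [Ring R] [AddCommGroup E] [Module R E]
    [AddCommGroup F] [Module R F] [AddCommGroup G] [Module R G]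
    (f : E →ₗ[R] F) (g : E →ₗ[R] G) (p₀ : E) :
    f '' {p | g p = g p₀} = (fun w => f p₀ + w) '' ((LinearMap.ker g).map f : Set F) := by
  have fiber_eq : {p | g p = g p₀} = (fun w => p₀ + w) '' (LinearMap.ker g : Set E) := by
    ext p
    simp [Set.image_add_left, sub_eq_zero, neg_add_eq_sub]
  simp only [fiber_eq, Submodule.map_coe, Set.image_image, map_add]

section Matrix

variable {m n n₁ n₂ : Type*} [Fintype n] [Fintype n₁] [Fintype n₂]

lemma range_mulVecLin_fromCols {R : Type*} [CommSemiring R]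
    (A : Matrix m n₁ R) (B : Matrix m n₂ R) :
    LinearMap.range (A.fromCols B).mulVecLin =
      LinearMap.range (A.mulVecLin.coprod B.mulVecLin) := by
  have comp_eq : (A.mulVecLin.coprod B.mulVecLin) ∘ₗ
      (LinearEquiv.sumArrowLequivProdArrow n₁ n₂ R R).toLinearMap = (A.fromCols B).mulVecLin :=
    LinearMap.ext fun x => (A.fromCols_mulVec B x).symm
  rw [← comp_eq, LinearMap.range_comp_of_range_eq_top _ (LinearEquiv.range _)]

lemma map_algebraMap_mulVec_star {R S : Type*} [CommSemiring R] [StarRing R] [TrivialStar R]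
    [CommSemiring S] [StarRing S] [Algebra R S] [StarModule R S] (A : Matrix m n R) (x : n → S) :
    (A.map (algebraMap R S)).mulVec (star x) = star ((A.map (algebraMap R S)).mulVec x) := by
  ext i
  simp [Matrix.mulVec, dotProduct, ← algebraMap_star_comm]

lemma rank_map_algebraMap {R K : Type*} [Fintype m] [CommRing R] [Field K] [Algebra R K]
    [FaithfulSMul R K] {A : Matrix m n R} (hA : LinearIndependent R A.row) :
    (A.map (algebraMap R K)).rank = Fintype.card m := by
  have row_independent : LinearIndependent K fun i => algebraMap R K ∘ A.row i :=
    linearIndependent_algebraMap_comp_iff.mpr hA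
  exact LinearIndependent.rank_matrix (M := A.map (algebraMap R K)) row_independent

lemma card_le_two_mul_finrank_map_ker_pairForm {R K : Type*} [Fintype m]
    [CommRing R] [StarRing R] [TrivialStar R]
    [Field K] [StarRing K] [Algebra R K] [StarModule R K] [FaithfulSMul R K]
    {A B : Matrix m n R} (hAB : LinearIndependent R (A.fromCols B).row)
    {a b : K} (hab : a * star b ≠ b * star a) :
    Fintype.card m ≤ 2 * Module.finrank K ((LinearMap.ker (pairForm (n → K) a b)).map
      ((A.map (algebraMap R K)).mulVecLin.coprod (B.map (algebraMap R K)).mulVecLin)) := by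
  rw [← rank_map_algebraMap (K := K) hAB, Matrix.rank, Matrix.fromCols_map,
    range_mulVecLin_fromCols]
  refine finrank_range_le_two_mul_finrank_map (fun p => ?_) ?_
  · simp [map_algebraMap_mulVec_star]
  · rw [starSubmodule_ker_pairForm, ker_pairForm_sup_ker_pairForm hab]

end Matrix

lemma one_add_mul_star_one_sub_ne {c : ℂ} (hc : c.im ≠ 0) :
    (1 + c) * star (1 - c) ≠ (1 - c) * star (1 + c) := by
  intro h
  have star_eq : star c = c := by
    simp only [star_sub, star_add, star_one] at h
    linear_combination -h / 2
  exact hc (conj_eq_iff_im.mp star_eq)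

lemma im_inv_mul_I_ne_zero {β : ℂ} (hβ : β.re ≠ 0) : (β⁻¹ * I).im ≠ 0 := by
  have β_ne_zero : β ≠ 0 := fun h => hβ (by rw [h, zero_re])
  simp [hβ, β_ne_zero]

lemma linearIndependent_real_sumElim_intCast {ι₁ ι₂ κ : Type*} [Finite ι₁] [Finite ι₂]
    {m₁ : κ → ι₁ → ℤ} {m₂ : κ → ι₂ → ℤ}
    (hind : LinearIndependent ℤ fun i => Sum.elim (m₁ i) (m₂ i)) :
    LinearIndependent ℝ fun i => Sum.elim (fun j => (m₁ i j : ℝ)) (fun j => (m₂ i j : ℝ)) := by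
  have comp_independent := (linearIndependent_algebraMap_comp_iff (S := ℝ)).mpr hind
  simp only [Sum.comp_elim] at comp_independent
  exact comp_independent

theorem statement7_general {ι κ : Type*} [Fintype ι] [Fintype κ] (β : ℂ) (hβ : β.re ≠ 0)
    (s : ι → ℂ) (m₁ m₂ : κ → ι → ℝ)
    (hind : LinearIndependent ℝ
      (fun i => Sum.elim (m₁ i) (m₂ i) : κ → (ι ⊕ ι → ℝ))) :
    ∃ (W : Submodule ℂ (κ → ℂ)) (v : κ → ℂ),
      (fun p : (ι → ℂ) × (ι → ℂ) =>
          fun i => (∑ j, (m₁ i j : ℂ) * p.1 j) + ∑ j, (m₂ i j : ℂ) * p.2 j) ''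
          {p : (ι → ℂ) × (ι → ℂ) |
            ∀ j, (p.1 j + p.2 j) + β⁻¹ * I * (p.1 j - p.2 j) = 2 * s j}
        = (fun w => v + w) '' (W : Set (κ → ℂ))
      ∧ Fintype.card κ ≤ 2 * Module.finrank ℂ W := by
  let M : (ι → ℂ) × (ι → ℂ) →ₗ[ℂ] κ → ℂ :=
    ((Matrix.of m₁).map (algebraMap ℝ ℂ)).mulVecLin.coprod
      ((Matrix.of m₂).map (algebraMap ℝ ℂ)).mulVecLin
  let φ := pairForm (ι → ℂ) (1 + β⁻¹ * I) (1 - β⁻¹ * I)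
  have fiber_eq : {p : (ι → ℂ) × (ι → ℂ) |
      ∀ j, (p.1 j + p.2 j) + β⁻¹ * I * (p.1 j - p.2 j) = 2 * s j} = {p | φ p = φ (s, s)} := by
    ext p
    simp only [Set.mem_ofPred_eq, φ, pairForm_apply, funext_iff, Pi.add_apply, Pi.smul_apply,
      smul_eq_mul]
    refine forall_congr' fun j => ?_
    ring_nf
  refine ⟨(LinearMap.ker φ).map M, M (s, s), ?_, card_le_two_mul_finrank_map_ker_pairForm hind
    (one_add_mul_star_one_sub_ne (im_inv_mul_I_ne_zero hβ))⟩
  rw [fiber_eq]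
  exact image_fiber_eq_add_map_ker M φ (s, s)

/-- for `L_s = {(x, x̄) : (x + x̄) + β⁻¹i(x − x̄) = 2s}` and `M`
the linear map given by `k` linearly independent integer vectors
`(m¹,n¹),…,(mᵏ,nᵏ) ∈ ℤ^{2n}`, the image `M(L_s)` is a coset of a ℂ-linear
subspace of `ℂ^k` of dimension `d` with `2d ≥ k`. -/
theorem statement7 (β : ℝ) (hβ : β ≠ 0) (n k : ℕ) (s : Fin n → ℝ)
    (m₁ m₂ : Fin k → Fin n → ℤ)
    (hind : LinearIndependent ℤ
      (fun i => Sum.elim (m₁ i) (m₂ i) : Fin k → (Fin n ⊕ Fin n → ℤ))) :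
    ∃ (W : Submodule ℂ (Fin k → ℂ)) (v : Fin k → ℂ),
      (fun p : (Fin n → ℂ) × (Fin n → ℂ) =>
          fun i => (∑ j, (m₁ i j : ℂ) * p.1 j) + ∑ j, (m₂ i j : ℂ) * p.2 j) ''
          {p : (Fin n → ℂ) × (Fin n → ℂ) |
            ∀ j, (p.1 j + p.2 j) + (β : ℂ)⁻¹ * I * (p.1 j - p.2 j) = 2 * s j}
        = (fun w => v + w) '' (W : Set (Fin k → ℂ))
      ∧ k ≤ 2 * Module.finrank ℂ W := by
  simpa using statement7_general β (by simpa using hβ) (fun j => s j) _ _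
    (linearIndependent_real_sumElim_intCast hind)
end

section
/- Let τ ∈ ℂ with Im(τ) ≠ 0 and set Λ = ℤ + τℤ. Let β be a non-zero real number, ε = 1 + βi, and K = ℚ(βi). Let t ∈ ℝ^n and set x = εt (coordinatewise). Assume lin.d._ℚ(x/Λ) = n, i.e. the coordinates of x are ℚ-linearly independent modulo the ℚ-span of {1, τ}. Then: (a) lin.d._ℚ(x, x^c / Λ) ≥ 2n − 2, i.e. dim_ℚ(span_ℚ(x₁,…,x_n, x₁^c,…,x_n^c, 1, τ)) − dim_ℚ(span_ℚ(1, τ)) ≥ 2n − 2; and (b) lin.d._K(x, x^c) ≤ n, where x^c denotes the coordinatewise complex conjugate of x. -/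
open Complex

/-!
The tuples `x = εt` and `x^c = ε^c t` consist of the products of the coordinates of `t`, which are
`ℚ`-linearly independent in `ℝ`, with `ε` and `ε^c`, which are `ℝ`-linearly independent in `ℂ`. As
in the tower law these `2n` products are `ℚ`-linearly independent, and `Λ` has rank at most `2`.
Over `K`, which contains both `ε` and `ε^c`, all the products lie in the span of `t`.
-/

section LinDim

variable {F : Type*} [Field F] [Algebra F ℂ] {ι : Type*} [Fintype ι]

theorem linDim_mono {s t : Set ℂ} (ht : t.Finite) (hst : s ⊆ t) : linDim F s ≤ linDim F t :=
  have := Module.Finite.span_of_finite F ht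
  Submodule.finrank_mono (Submodule.span_mono hst)

theorem linDim_union_le {s t : Set ℂ} (hs : s.Finite) (ht : t.Finite) :
    linDim F (s ∪ t) ≤ linDim F s + linDim F t := by
  have := Module.Finite.span_of_finite F hs
  have := Module.Finite.span_of_finite F ht
  rw [linDim, Submodule.span_union]
  exact Submodule.finrank_add_le_finrank_add_finrank _ _

theorem linDim_range_le_card (v : ι → ℂ) : linDim F (Set.range v) ≤ Fintype.card ι :=
  finrank_range_le_card v

theorem linDim_pair_le_two (a b : ℂ) : linDim F {a, b} ≤ 2 := by
  simpa only [Matrix.range_cons_cons_empty, Fintype.card_fin] using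
    linDim_range_le_card (F := F) ![a, b]

theorem linDim_le_card_of_subset_span {s : Set ℂ} {v : ι → ℂ}
    (hs : s ⊆ Submodule.span F (Set.range v)) : linDim F s ≤ Fintype.card ι :=
  have := Module.Finite.span_of_finite F (Set.finite_range v)
  (Submodule.finrank_mono (Submodule.span_le.2 hs)).trans (linDim_range_le_card v)

theorem linearIndependent_of_card_le_linDim_union_sub {v : ι → ℂ} {s : Set ℂ} (hs : s.Finite)
    (h : Fintype.card ι ≤ linDim F (Set.range v ∪ s) - linDim F s) : LinearIndependent F v := by
  have hunion := linDim_union_le (F := F) (Set.finite_range v) hs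
  exact linearIndependent_iff_card_le_finrank_span.2 (h.trans (Nat.sub_le_iff_le_add.2 hunion))

end LinDim

section Conjugates

open ComplexConjugate

theorem linearIndependent_pair_conj {ε : ℂ} (hre : ε.re ≠ 0) (him : ε.im ≠ 0) :
    LinearIndependent ℝ ![ε, conj ε] := by
  refine LinearIndependent.pair_iff.2 fun a b h => ?_
  have hadd : a + b = 0 := by
    have := congrArg re h
    simp only [add_re, real_smul, re_ofReal_mul, conj_re, zero_re, ← add_mul] at this
    exact (mul_eq_zero.1 this).resolve_right hre
  have hsub : a - b = 0 := by
    have := congrArg im h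
    simp only [add_im, real_smul, im_ofReal_mul, conj_im, zero_im, mul_neg, ← sub_eq_add_neg,
      ← sub_mul] at this
    exact (mul_eq_zero.1 this).resolve_right him
  constructor <;> linarith

variable {F ι : Type*} [Field F] [Algebra F ℝ] [Algebra F ℂ] [IsScalarTower F ℝ ℂ]

theorem linearIndependent_of_mul_ofReal {ε : ℂ} {t : ι → ℝ}
    (h : LinearIndependent F fun i => ε * t i) : LinearIndependent F t := by
  refine LinearIndependent.of_comp ((LinearMap.toSpanSingleton ℝ ℂ ε).restrictScalars F) ?_
  simpa only [Function.comp_def, LinearMap.restrictScalars_apply, LinearMap.toSpanSingleton_apply,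
    real_smul, mul_comm] using h

theorem linDim_range_mul_union_range_conj_mul [Fintype ι] {ε : ℂ} (hre : ε.re ≠ 0)
    (him : ε.im ≠ 0) {t : ι → ℝ} (ht : LinearIndependent F t) :
    linDim F (Set.range (fun i => ε * t i) ∪ Set.range fun i => conj (ε * t i)) =
      2 * Fintype.card ι := by
  have hprod := linearIndependent_smul ht (linearIndependent_pair_conj hre him)
  have hrange : Set.range (fun p : ι × Fin 2 => t p.1 • ![ε, conj ε] p.2) =
      Set.range (fun i => ε * t i) ∪ Set.range fun i => conj (ε * t i) := by
    ext z
    simp only [Set.mem_range, Prod.exists, Fin.exists_fin_two, Matrix.cons_val_zero,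
      Matrix.cons_val_one, exists_or, Set.mem_union, real_smul, map_mul, conj_ofReal, mul_comm]
  rw [linDim, ← hrange, finrank_span_eq_card hprod, Fintype.card_prod, Fintype.card_fin, mul_comm]

theorem linDim_range_smul_union_range_smul_le [Fintype ι] {K : Type*} [Field K] [Algebra K ℂ]
    (a b : K) (v : ι → ℂ) :
    linDim K (Set.range (fun i => a • v i) ∪ Set.range fun i => b • v i) ≤ Fintype.card ι := by
  refine linDim_le_card_of_subset_span (v := v) (Set.union_subset ?_ ?_) <;>
  · rintro _ ⟨i, rfl⟩
    exact Submodule.smul_mem _ _ (Submodule.subset_span (Set.mem_range_self i))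

end Conjugates

theorem statement8_general {ε : ℂ} (hre : ε.re ≠ 0) (him : ε.im ≠ 0)
    {K : IntermediateField ℚ ℂ} (hε : ε ∈ K) (hconj : (starRingEnd ℂ) ε ∈ K)
    {n : ℕ} {t : Fin n → ℝ} {x : Fin n → ℂ} (hx : ∀ i, x i = ε * t i)
    (hli : LinearIndependent ℚ x) (ω₁ ω₂ : ℂ) :
    (linDim ℚ (Set.range x ∪ Set.range (fun i => (starRingEnd ℂ) (x i)) ∪ {ω₁, ω₂}) : ℤ)
          - linDim ℚ ({ω₁, ω₂} : Set ℂ) ≥ 2 * n - 2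
      ∧ linDim K (Set.range x ∪ Set.range fun i => (starRingEnd ℂ) (x i)) ≤ n := by
  obtain rfl : x = fun i => ε * t i := funext hx
  beta_reduce
  constructor
  · have hdim := linDim_range_mul_union_range_conj_mul hre him (linearIndependent_of_mul_ofReal hli)
    have hmono := linDim_mono (F := ℚ) (Set.toFinite _) (Set.subset_union_left
      (s := Set.range (fun i => ε * t i) ∪ Set.range fun i => (starRingEnd ℂ) (ε * t i))
      (t := {ω₁, ω₂}))
    have hpair := linDim_pair_le_two (F := ℚ) ω₁ ω₂
    rw [Fintype.card_fin] at hdim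
    omega
  · simpa only [IntermediateField.smul_def, smul_eq_mul, map_mul, conj_ofReal, Fintype.card_fin]
      using linDim_range_smul_union_range_smul_le (⟨ε, hε⟩ : K) ⟨_, hconj⟩ fun i => (t i : ℂ)

/-- with `Λ = ℤ + τℤ`, `ε = 1 + βi`, `K = ℚ(βi)` and `x = εt`
for a real tuple `t`, if `lin.d._ℚ(x/Λ) = n` then
(a) `lin.d._ℚ(x, x^c/Λ) ≥ 2n − 2` and (b) `lin.d._K(x, x^c) ≤ n`. -/
theorem statement8 (τ : ℂ) (hτ : τ.im ≠ 0) (β : ℝ) (hβ : β ≠ 0)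
    (ε : ℂ) (hε : ε = 1 + β * I)
    (K : IntermediateField ℚ ℂ) (hK : K = IntermediateField.adjoin ℚ {(β : ℂ) * I})
    (n : ℕ) (t : Fin n → ℝ) (x : Fin n → ℂ) (hx : ∀ i, x i = ε * t i)
    (hmod : linDim ℚ (Set.range x ∪ {1, τ}) - linDim ℚ ({1, τ} : Set ℂ) = n) :
    (linDim ℚ (Set.range x ∪ Set.range (fun i => (starRingEnd ℂ) (x i)) ∪ {1, τ}) : ℤ)
          - linDim ℚ ({1, τ} : Set ℂ) ≥ 2 * n - 2
      ∧ linDim K (Set.range x ∪ Set.range fun i => (starRingEnd ℂ) (x i)) ≤ n := by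
  have hβK : (β : ℂ) * I ∈ K := hK ▸ IntermediateField.mem_adjoin_simple_self ℚ _
  have hconj : (starRingEnd ℂ) ε = 1 - β * I := by
    simp only [hε, map_add, map_one, map_mul, conj_ofReal, conj_I, mul_neg, sub_eq_add_neg]
  have hli : LinearIndependent ℚ x :=
    linearIndependent_of_card_le_linDim_union_sub (Set.toFinite _)
      ((Fintype.card_fin n).trans hmod.symm).le
  exact statement8_general (by simp [hε]) (by simpa [hε] using hβ)
    (hε ▸ K.add_mem K.one_mem hβK) (hconj ▸ K.sub_mem K.one_mem hβK) hx hli 1 τ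
end

section
/- Let τ ∈ ℂ with Im(τ) ≠ 0 and set Λ = ℤ + τℤ. Let ε ∈ ℂ with Im(ε) ≠ 0 and suppose εℝ ∩ Λ = {0}. Set α = Re(τ) − (Re(ε)/Im(ε))·Im(τ). Then α is irrational, the sets εℝ + Λ and εℝ + ℤ + αℤ coincide as subsets of ℂ, and εℝ + Λ is dense in ℂ. -/
open Complex

/-! Let `π : ℂ → ℝ` be the projection along the line `εℝ`, so that `α = π τ`. For every `σ : ℂ`,
`εℝ + ℤ + σℤ` is the preimage under `π` of the subgroup `ℤ + π(σ)ℤ` of `ℝ`. Since `π τ = π α`, the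
two sets agree; since `π` is open, they are dense as soon as `ℤ + αℤ` is dense in `ℝ`, that is, as
soon as `α` is irrational. If `α = p / q`, then `π (qτ - p) = 0`, so `qτ - p` is a point of
`εℝ ∩ Λ` with nonzero imaginary part. -/

/-- The projection of `ℂ` onto the real axis along the line `εℝ`, for non-real `ε`, as a continuous
`ℝ`-linear functional. For real `ε` the division by zero makes it the real part. -/
noncomputable def realProjAlong (ε : ℂ) : ℂ →L[ℝ] ℝ :=
  reCLM - (ε.re / ε.im) • imCLM

section RealProjAlong

variable {ε : ℂ}

theorem realProjAlong_apply (ε z : ℂ) :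
    realProjAlong ε z = z.re - ε.re / ε.im * z.im :=
  rfl

theorem realProjAlong_ofReal (ε : ℂ) (r : ℝ) : realProjAlong ε r = r := by
  simp [realProjAlong_apply]

theorem realProjAlong_intCast_add_intCast_mul (ε τ : ℂ) (a b : ℤ) :
    realProjAlong ε (a + b * τ) = a + b * realProjAlong ε τ := by
  simp only [realProjAlong_apply, add_re, add_im, mul_re, mul_im, intCast_re, intCast_im]
  ring

theorem realProjAlong_eq_zero_iff (hε : ε.im ≠ 0) {z : ℂ} :
    realProjAlong ε z = 0 ↔ ∃ t : ℝ, z = ε * t := by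
  constructor
  · intro hz
    rw [realProjAlong_apply, sub_eq_zero] at hz
    refine ⟨z.im / ε.im, Complex.ext ?_ ?_⟩
    · rw [re_mul_ofReal, hz]
      ring
    · rw [im_mul_ofReal, mul_div_cancel₀ _ hε]
  · rintro ⟨t, rfl⟩
    rw [realProjAlong_apply, re_mul_ofReal, im_mul_ofReal]
    field_simp
    ring

theorem isOpenMap_realProjAlong (ε : ℂ) : IsOpenMap (realProjAlong ε) :=
  (realProjAlong ε).isOpenMap fun r ↦ ⟨r, realProjAlong_ofReal ε r⟩

theorem setOf_line_add_int_span_eq_preimage (hε : ε.im ≠ 0) (σ : ℂ) :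
    {z : ℂ | ∃ t : ℝ, ∃ a b : ℤ, z = ε * t + a + b * σ} =
      realProjAlong ε ⁻¹' (AddSubgroup.closure {realProjAlong ε σ, 1} : Set ℝ) := by
  ext z
  calc
    (∃ t : ℝ, ∃ a b : ℤ, z = ε * t + a + b * σ)
      ↔ ∃ b a : ℤ, ∃ t : ℝ, z - (a + b * σ) = ε * t := by
        simp only [sub_eq_iff_eq_add, add_assoc]
        exact ⟨fun ⟨t, a, b, h⟩ ↦ ⟨b, a, t, h⟩, fun ⟨b, a, t, h⟩ ↦ ⟨t, a, b, h⟩⟩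
    _ ↔ ∃ b a : ℤ, realProjAlong ε z = a + b * realProjAlong ε σ := by
        simp only [← realProjAlong_eq_zero_iff hε, map_sub, sub_eq_zero,
          realProjAlong_intCast_add_intCast_mul]
    _ ↔ realProjAlong ε z ∈ AddSubgroup.closure {realProjAlong ε σ, 1} := by
        simp only [AddSubgroup.mem_closure_pair, zsmul_eq_mul, mul_one, add_comm, eq_comm]

theorem dense_setOf_line_add_int_span (hε : ε.im ≠ 0) {σ : ℂ}
    (hσ : Irrational (realProjAlong ε σ)) :
    Dense {z : ℂ | ∃ t : ℝ, ∃ a b : ℤ, z = ε * t + a + b * σ} := by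
  have hdense : Dense (AddSubgroup.closure {realProjAlong ε σ, 1} : Set ℝ) :=
    dense_addSubgroupClosure_pair_iff.mpr (by rwa [div_one])
  rw [setOf_line_add_int_span_eq_preimage hε]
  exact hdense.preimage (isOpenMap_realProjAlong ε)

theorem irrational_realProjAlong (hε : ε.im ≠ 0) {τ : ℂ} (hτ : τ.im ≠ 0)
    (hcap : {z : ℂ | ∃ t : ℝ, z = ε * t} ∩ {z : ℂ | ∃ a b : ℤ, z = a + b * τ} ⊆ {0}) :
    Irrational (realProjAlong ε τ) := by
  rw [irrational_iff_ne_rational]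
  intro p q hq hpq
  have hproj : realProjAlong ε ((-p : ℤ) + q * τ) = 0 := by
    rw [realProjAlong_intCast_add_intCast_mul, hpq, mul_div_cancel₀ _ (Int.cast_ne_zero.mpr hq),
      Int.cast_neg, neg_add_cancel]
  have hzero : ((-p : ℤ) + q * τ : ℂ) = 0 :=
    hcap ⟨(realProjAlong_eq_zero_iff hε).mp hproj, -p, q, rfl⟩
  have him : (q : ℝ) * τ.im = 0 := by
    simpa using congrArg im hzero
  exact mul_ne_zero (Int.cast_ne_zero.mpr hq) hτ him

end RealProjAlong

/-- for `Λ = ℤ + τℤ` (with `τ` non-real) and `ε` non-real with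
`εℝ ∩ Λ = {0}`, the number `α = Re(τ) − (Re(ε)/Im(ε))·Im(τ)` is irrational,
`εℝ + Λ = εℝ + ℤ + αℤ`, and `εℝ + Λ` is dense in ℂ. -/
theorem statement9 (τ : ℂ) (hτ : τ.im ≠ 0) (ε : ℂ) (hε : ε.im ≠ 0)
    (hcap : {z : ℂ | ∃ t : ℝ, z = ε * t} ∩ {z : ℂ | ∃ a b : ℤ, z = a + b * τ} = {0})
    (α : ℝ) (hα : α = τ.re - (ε.re / ε.im) * τ.im) :
    Irrational α
      ∧ {z : ℂ | ∃ t : ℝ, ∃ a b : ℤ, z = ε * t + a + b * τ}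
          = {z : ℂ | ∃ t : ℝ, ∃ a b : ℤ, z = ε * t + a + b * (α : ℂ)}
      ∧ Dense {z : ℂ | ∃ t : ℝ, ∃ a b : ℤ, z = ε * t + a + b * τ} := by
  have hτα : realProjAlong ε τ = α := hα.symm
  have hirr : Irrational α := hτα ▸ irrational_realProjAlong hε hτ hcap.subset
  refine ⟨hirr, ?_, dense_setOf_line_add_int_span hε (hτα.symm ▸ hirr)⟩
  rw [setOf_line_add_int_span_eq_preimage hε, setOf_line_add_int_span_eq_preimage hε, hτα,
    realProjAlong_ofReal]
end
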